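/- Let G be a group acting by isometries on a proper metric space (X,d), with the action proper and cocompact, and let σ be a ccc, reversible, G-equivariant geodesic bicombing on X. If G contains a subgroup A isomorphic to ℤⁿ for some n ≥ 1, then for any basepoint o ∈ X there is a topological embedding of the Euclidean sphere S^{n−1} into the set of σ-rays emanating from o, metrized by d_o (which is a metric on this set). Moreover, if A has finite index in G, then the set of σ-rays emanating from o with the metric d_o is homeomorphic to S^{n−1}. -/

import Mathlib

open Metric Set

variable {X : Type*} [MetricSpace X]

/-- A geodesic bicombing on a metric space: a continuous choice of constant-speed
geodesics, parametrized on `[0,1]`. -/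
def IsGeodesicBicombing (σ : X → X → ℝ → X) : Prop :=
  ContinuousOn (fun p : X × X × ℝ => σ p.1 p.2.1 p.2.2)
    {p : X × X × ℝ | p.2.2 ∈ Set.Icc (0 : ℝ) 1} ∧
  (∀ x y : X, σ x y 0 = x) ∧
  (∀ x y : X, σ x y 1 = y) ∧
  (∀ x y : X, ∀ s ∈ Set.Icc (0 : ℝ) 1, ∀ t ∈ Set.Icc (0 : ℝ) 1,
    dist (σ x y s) (σ x y t) = |s - t| * dist x y)

/-- A bicombing is conical. -/
def IsConical (σ : X → X → ℝ → X) : Prop :=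
  ∀ x y x' y' : X, ∀ t ∈ Set.Icc (0 : ℝ) 1,
    dist (σ x y t) (σ x' y' t) ≤ (1 - t) * dist x x' + t * dist y y'

/-- A bicombing is consistent. -/
def IsConsistent (σ : X → X → ℝ → X) : Prop :=
  ∀ x y : X, ∀ s t l : ℝ, 0 ≤ s → s ≤ t → t ≤ 1 → l ∈ Set.Icc (0 : ℝ) 1 →
    σ (σ x y s) (σ x y t) l = σ x y ((1 - l) * s + l * t)

/-- A ccc bicombing: a geodesic bicombing that is consistent and conical. -/
def IsCCC (σ : X → X → ℝ → X) : Prop :=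
  IsGeodesicBicombing σ ∧ IsConsistent σ ∧ IsConical σ

/-- A `σ`-ray: a unit-speed geodesic ray compatible with the bicombing `σ`
(encoded as a map on `ℝ` which is constant on `(-∞,0]`). -/
def IsRay (σ : X → X → ℝ → X) (ξ : ℝ → X) : Prop :=
  (∀ t : ℝ, t ≤ 0 → ξ t = ξ 0) ∧
  (∀ s t : ℝ, 0 ≤ s → 0 ≤ t → dist (ξ s) (ξ t) = |s - t|) ∧
  (∀ t : ℝ, 0 ≤ t → ∀ s ∈ Set.Icc (0 : ℝ) 1, σ (ξ 0) (ξ t) s = ξ (s * t))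

/-- Two rays are asymptotic: their distance at time `t` is uniformly bounded for `t ≥ 0`. -/
def Asymptotic (ξ ζ : ℝ → X) : Prop :=
  ∃ M : ℝ, ∀ t : ℝ, 0 ≤ t → dist (ξ t) (ζ t) ≤ M

open scoped Pointwise

/-- A bicombing is reversible. -/
def IsReversible (σ : X → X → ℝ → X) : Prop :=
  ∀ x y : X, ∀ t ∈ Set.Icc (0 : ℝ) 1, σ x y t = σ y x (1 - t)

/-- The metric `d_o` on rays emanating from `o`:
`d_o(ξ,ζ) = ∑_{n ≥ 1} 2⁻ⁿ · min(d(ξ(n),ζ(n)), 1)`. -/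
noncomputable def dO (o : X) (ξ ζ : ℝ → X) : ℝ :=
  ∑' n : ℕ, (1 / 2 : ℝ) ^ (n + 1) * min (dist (ξ ((n : ℝ) + 1)) (ζ ((n : ℝ) + 1))) 1

/-! ### Midpoints -/

theorem sib_mid_conv {σ : X → X → ℝ → X} (hσ : IsCCC σ) (x y x' y' : X) :
    dist (σ x y (1/2)) (σ x' y' (1/2)) ≤ (dist x x' + dist y y') / 2 := by
  have h := hσ.2.2 x y x' y' (1/2) ⟨by norm_num, by norm_num⟩
  linarith

theorem sib_self {σ : X → X → ℝ → X} (hσ : IsCCC σ) (x : X) (t : ℝ) (ht : t ∈ Set.Icc (0:ℝ) 1) :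
    σ x x t = x := by
  have h := hσ.1.2.2.2 x x t ht 0 ⟨le_refl _, zero_le_one⟩
  rw [dist_self, mul_zero, hσ.1.2.1] at h
  exact dist_eq_zero.mp h

theorem sib_mid_dist {σ : X → X → ℝ → X} (hσ : IsCCC σ) (x y q : X) :
    dist (σ x y (1/2)) q ≤ (dist x q + dist y q) / 2 := by
  have h := sib_mid_conv hσ x y q q
  rwa [sib_self hσ q _ ⟨by norm_num, by norm_num⟩] at h

theorem sib_mid_symm {σ : X → X → ℝ → X} (hrev : IsReversible σ) (x y : X) :
    σ x y (1/2) = σ y x (1/2) := by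
  have h := hrev x y (1/2) ⟨by norm_num, by norm_num⟩
  rw [h]; norm_num

section act
variable {G : Type*} [Group G] [MulAction G X] [ProperSpace X] [IsIsometricSMul G X]

/-- Bounded displacement elements are finite. -/
theorem sib_finite_disp
    (hproperact : ∀ K : Set X, IsCompact K → {g : G | ((g • K) ∩ K).Nonempty}.Finite)
    (o : X) (r : ℝ) : {g : G | dist (g • o) o ≤ r}.Finite := by
  refine (hproperact (closedBall o (max r 0)) (isCompact_closedBall _ _)).subset ?_
  intro g hg
  refine ⟨g • o, Set.smul_mem_smul_set (mem_closedBall_self (le_max_right _ _)), ?_⟩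
  exact mem_closedBall.mpr (le_trans hg (le_max_left _ _))

/-- The set of points moved by each element of `F` at most as much as `o`. -/
def SibDisp (F : Set G) (o : X) : Set X := {x | ∀ h ∈ F, dist (h • x) x ≤ dist (h • o) o}

theorem sib_cobounded
    (hproperact : ∀ K : Set X, IsCompact K → {g : G | ((g • K) ∩ K).Nonempty}.Finite)
    (hcocompact : ∃ K : Set X, IsCompact K ∧ ∀ x : X, ∃ g : G, x ∈ g • K)
    (o : X) (F : Set G) (hF : F.Finite) :
    ∃ R : ℝ, 0 ≤ R ∧ ∀ x ∈ SibDisp F o, ∃ z ∈ Subgroup.centralizer F, dist x (z • o) ≤ R := by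
  obtain ⟨K, hK, hcov⟩ := hcocompact
  obtain ⟨r, hr⟩ := hK.isBounded.subset_closedBall o
  obtain ⟨l, hl⟩ := (hF.image (fun h => dist (h • o) o)).bddAbove
  have hl' : ∀ h ∈ F, dist (h • o) o ≤ l := fun h hh => hl (Set.mem_image_of_mem _ hh)
  set E : Set G := {g : G | dist (g • o) o ≤ l + 2 * r} with hE
  have hEf : E.Finite := sib_finite_disp hproperact o _
  have : Finite F := hF
  set S : Set (F → G) := Set.univ.pi (fun _ => E) with hS
  have hSf : S.Finite := Set.Finite.pi (fun _ => hEf)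
  set S' : Set (F → G) := {φ ∈ S | ∃ g : G, ∀ h : F, φ h = g⁻¹ * h * g} with hS'
  have hS'f : S'.Finite := hSf.subset (fun _ h => h.1)
  have hch : ∀ φ : F → G, ∃ g : G, φ ∈ S' → ∀ h : F, φ h = g⁻¹ * h * g := by
    intro φ
    by_cases h : φ ∈ S'
    · obtain ⟨g, hg⟩ := h.2
      exact ⟨g, fun _ => hg⟩
    · exact ⟨1, fun h' => absurd h' h⟩
  choose γ hγ using hch
  obtain ⟨M, hM⟩ := (hS'f.image (fun φ => dist o ((γ φ)⁻¹ • o))).bddAbove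
  refine ⟨max (r + M) 0, le_max_right _ _, ?_⟩
  intro x hx
  obtain ⟨g, hg⟩ := hcov x
  obtain ⟨k, hk, rfl⟩ := hg
  simp only at hx ⊢
  have hko : dist k o ≤ r := mem_closedBall.mp (hr hk)
  let φ : F → G := fun h => g⁻¹ * h * g
  have hφ : φ ∈ S' := by
    refine ⟨?_, g, fun h => rfl⟩
    intro h _
    have h1 : dist ((g⁻¹ * (h:G) * g) • k) k ≤ l := by
      have := (hx h h.2).trans (hl' h h.2)
      rw [← dist_smul g, smul_smul]
      simpa [mul_assoc, smul_smul] using this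
    have h2 : dist ((g⁻¹ * (h:G) * g) • o) ((g⁻¹ * (h:G) * g) • k) ≤ r := by
      rw [dist_smul, dist_comm]; exact hko
    change dist ((g⁻¹ * (h:G) * g) • o) o ≤ l + 2 * r
    have h3 := dist_triangle4 ((g⁻¹ * (h:G) * g) • o) ((g⁻¹ * (h:G) * g) • k) k o
    linarith
  refine ⟨g * (γ φ)⁻¹, ?_, ?_⟩
  · rw [Subgroup.mem_centralizer_iff]
    intro h hh
    have h1 := hγ φ hφ ⟨h, hh⟩
    have h2 : g⁻¹ * h * g = (γ φ)⁻¹ * h * γ φ := h1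
    have h3 : h * g = g * ((γ φ)⁻¹ * h * γ φ) := by rw [← h2]; group
    rw [← mul_assoc, h3]; group
  · have h1 : dist o ((γ φ)⁻¹ • o) ≤ M := hM (Set.mem_image_of_mem _ hφ)
    have h2 : dist (g • k) ((g * (γ φ)⁻¹) • o) = dist k ((γ φ)⁻¹ • o) := by
      rw [mul_smul, dist_smul]
    rw [h2]
    have := dist_triangle k o ((γ φ)⁻¹ • o)
    exact le_max_of_le_left (by linarith)

theorem sib_centralizer_fg
    (σ : X → X → ℝ → X) (hσ : IsCCC σ)
    (hequiv : ∀ (g : G) (x y : X), ∀ t ∈ Set.Icc (0 : ℝ) 1,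
      g • σ x y t = σ (g • x) (g • y) t)
    (hproperact : ∀ K : Set X, IsCompact K → {g : G | ((g • K) ∩ K).Nonempty}.Finite)
    (hcocompact : ∃ K : Set X, IsCompact K ∧ ∀ x : X, ∃ g : G, x ∈ g • K)
    (o : X) (F : Set G) (hF : F.Finite) :
    ∃ F' : Set G, F'.Finite ∧ F' ⊆ Subgroup.centralizer F ∧
      Subgroup.centralizer F ≤ Subgroup.closure F' := by
  obtain ⟨R, hR0, hR⟩ := sib_cobounded hproperact hcocompact o F hF
  refine ⟨{g : G | dist (g • o) o ≤ 2 * R + 1} ∩ Subgroup.centralizer F,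
    (sib_finite_disp hproperact o _).inter_of_left _, Set.inter_subset_right, ?_⟩
  intro z hz
  have hseg : ∀ t ∈ Set.Icc (0:ℝ) 1, σ o (z • o) t ∈ SibDisp F o := by
    intro t ht h hh
    rw [hequiv h _ _ t ht]
    have h1 := hσ.2.2 (h • o) (h • z • o) o (z • o) t ht
    have h2 : h • z • o = z • h • o := by
      rw [smul_smul, smul_smul, (Subgroup.mem_centralizer_iff.mp hz) h hh]
    have h3 : dist (h • z • o) (z • o) = dist (h • o) o := by rw [h2, dist_smul]
    rw [h3] at h1
    linarith
  obtain ⟨m, hm⟩ := exists_nat_gt (dist o (z • o))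
  have hm0 : (0:ℝ) < m := lt_of_le_of_lt dist_nonneg hm
  -- points along the segment
  have key : ∀ i : ℕ, i ≤ m → ∀ w ∈ Subgroup.centralizer F,
      dist (σ o (z • o) (i / m)) (w • o) ≤ R →
      w ∈ Subgroup.closure ({g : G | dist (g • o) o ≤ 2 * R + 1} ∩ Subgroup.centralizer F) := by
    intro i
    induction i with
    | zero =>
      intro _ w hw hd
      apply Subgroup.subset_closure
      refine ⟨?_, hw⟩
      simp only [Nat.cast_zero, zero_div, hσ.1.2.1] at hd
      change dist (w • o) o ≤ _
      rw [dist_comm]; linarith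
    | succ i ih =>
      intro hi w hw hd
      have hmem : ∀ j : ℕ, j ≤ m → ((j:ℝ) / m) ∈ Set.Icc (0:ℝ) 1 := fun j hj =>
        ⟨by positivity, by rw [div_le_one hm0]; exact_mod_cast hj⟩
      obtain ⟨w', hw', hd'⟩ := hR _ (hseg _ (hmem i (by omega)))
      have h1 := ih (by omega) w' hw' hd'
      have h2 := hσ.1.2.2.2 o (z • o) _ (hmem i (by omega)) _ (hmem (i+1) hi)
      have h3 : |(i:ℝ) / m - ((i+1 : ℕ):ℝ) / m| = 1 / m := by
        rw [← sub_div]; push_cast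
        rw [show (i:ℝ) - (i+1) = -1 by ring, abs_div, abs_neg, abs_one, abs_of_pos hm0]
      rw [h3] at h2
      have h4 : 1 / (m:ℝ) * dist o (z • o) ≤ 1 := by
        rw [one_div, inv_mul_le_iff₀ hm0]; linarith
      have h5 : w'⁻¹ * w ∈ Subgroup.closure
          ({g : G | dist (g • o) o ≤ 2 * R + 1} ∩ Subgroup.centralizer F) := by
        apply Subgroup.subset_closure
        refine ⟨?_, mul_mem (inv_mem hw') hw⟩
        change dist ((w'⁻¹ * w) • o) o ≤ _
        rw [← dist_smul w', smul_smul, mul_inv_cancel_left]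
        have := dist_triangle4 (w • o) (σ o (z • o) ((i+1 : ℕ) / m)) (σ o (z • o) (i / m)) (w' • o)
        rw [dist_comm] at hd
        rw [dist_comm] at h2
        linarith
      have := mul_mem h1 h5
      rwa [mul_inv_cancel_left] at this
  apply key m le_rfl z hz
  rw [div_self hm0.ne', hσ.1.2.2.1, dist_self]; exact hR0

/-- Midpoints of orbit points of an abelian subgroup are uniformly close to the orbit. -/
theorem sib_midpoint_bound
    (σ : X → X → ℝ → X) (hσ : IsCCC σ) (hrev : IsReversible σ)
    (hequiv : ∀ (g : G) (x y : X), ∀ t ∈ Set.Icc (0 : ℝ) 1,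
      g • σ x y t = σ (g • x) (g • y) t)
    (hproperact : ∀ K : Set X, IsCompact K → {g : G | ((g • K) ∩ K).Nonempty}.Finite)
    (hcocompact : ∃ K : Set X, IsCompact K ∧ ∀ x : X, ∃ g : G, x ∈ g • K)
    (o : X) (A : Subgroup G) (hcomm : ∀ a ∈ A, ∀ b ∈ A, a * b = b * a)
    (F : Set G) (hF : F.Finite) (hFA : Subgroup.closure F = A) :
    ∃ R : ℝ, 0 ≤ R ∧ ∀ a ∈ A, dist (σ (a⁻¹ • o) (a • o) (1/2)) o ≤ R := by
  obtain ⟨F', hF', hsub, hgen⟩ := sib_centralizer_fg σ hσ hequiv hproperact hcocompact o F hF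
  obtain ⟨R, hR0, hR⟩ := sib_cobounded hproperact hcocompact o F' hF'
  have hhalf : (1/2 : ℝ) ∈ Set.Icc (0:ℝ) 1 := ⟨by norm_num, by norm_num⟩
  set B := Subgroup.centralizer F' with hB
  have hFsub : F ⊆ A := hFA ▸ Subgroup.subset_closure
  have hBZ : ∀ b ∈ B, ∀ z ∈ Subgroup.centralizer F, z * b = b * z := by
    intro b hb z hz
    have : Subgroup.centralizer F ≤ Subgroup.centralizer {b} := by
      refine hgen.trans ?_
      rw [Subgroup.closure_le]
      intro f hf
      rw [SetLike.mem_coe, Subgroup.mem_centralizer_iff]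
      rintro _ rfl
      exact ((Subgroup.mem_centralizer_iff.mp hb) f hf).symm
    exact ((Subgroup.mem_centralizer_iff.mp (this hz)) b rfl).symm
  have hFZ : F ⊆ Subgroup.centralizer F := by
    intro f hf
    rw [SetLike.mem_coe, Subgroup.mem_centralizer_iff]
    intro h hh
    exact hcomm _ (hFsub hh) _ (hFsub hf)
  have hBsub : ∀ b ∈ B, b ∈ Subgroup.centralizer F := by
    intro b hb
    rw [Subgroup.mem_centralizer_iff]
    intro f hf
    exact hBZ b hb f (hFZ hf)
  have hBcomm : ∀ b ∈ B, ∀ b' ∈ B, b * b' = b' * b := fun b hb b' hb' =>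
    hBZ b' hb' b (hBsub b hb)
  have hAB : ∀ a ∈ A, a ∈ B := by
    intro a ha
    rw [hB, Subgroup.mem_centralizer_iff]
    intro f hf
    have : A ≤ Subgroup.centralizer {f} := by
      rw [← hFA, Subgroup.closure_le]
      intro g hg
      rw [SetLike.mem_coe, Subgroup.mem_centralizer_iff]
      rintro _ rfl
      exact ((Subgroup.mem_centralizer_iff.mp (hsub hf)) g hg).symm
    exact (Subgroup.mem_centralizer_iff.mp (this ha)) f rfl
  have hYmid : ∀ x ∈ SibDisp F' o, ∀ b ∈ B, ∀ c ∈ B, σ (b • x) (c • x) (1/2) ∈ SibDisp F' o := by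
    intro x hx b hb c hc h hh
    rw [hequiv h _ _ _ hhalf]
    have h1 := sib_mid_conv hσ (h • b • x) (h • c • x) (b • x) (c • x)
    have h2 : ∀ e ∈ B, dist (h • e • x) (e • x) = dist (h • x) x := by
      intro e he
      rw [smul_smul, (Subgroup.mem_centralizer_iff.mp he) h hh, ← smul_smul, dist_smul]
    rw [h2 b hb, h2 c hc] at h1
    have := hx h hh
    linarith
  have hoY : o ∈ SibDisp F' o := fun h _ => le_refl _
  -- stable length controls displacement
  have claim1 : ∀ b ∈ B, ∀ N : ℕ, ∀ x ∈ SibDisp F' o, ∃ y ∈ SibDisp F' o,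
      dist (b • y) y ≤ dist (b ^ (2 ^ N) • x) x / 2 ^ N := by
    intro b hb N
    induction N with
    | zero => intro x hx; exact ⟨x, hx, by simp⟩
    | succ N ih =>
      intro x hx
      have hbN : b ^ 2 ^ N ∈ B := pow_mem hb _
      have hy : σ x (b ^ 2 ^ N • x) (1/2) ∈ SibDisp F' o := by
        have := hYmid x hx 1 (one_mem _) _ hbN
        rwa [one_smul] at this
      obtain ⟨y, hyY, hyd⟩ := ih _ hy
      refine ⟨y, hyY, hyd.trans ?_⟩
      have h1 : dist (b ^ 2 ^ N • σ x (b ^ 2 ^ N • x) (1/2)) (σ x (b ^ 2 ^ N • x) (1/2))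
          ≤ dist (b ^ 2 ^ (N+1) • x) x / 2 := by
        rw [hequiv _ _ _ _ hhalf, sib_mid_symm hrev]
        have := sib_mid_conv hσ (b ^ 2 ^ N • b ^ 2 ^ N • x) (b ^ 2 ^ N • x) x (b ^ 2 ^ N • x)
        rw [dist_self, add_zero, smul_smul, ← pow_add] at this
        rw [pow_succ 2 N, mul_two, smul_smul, ← pow_add]
        exact this
      rw [pow_succ (2:ℝ) N, mul_comm, ← div_div]
      gcongr
  have claim1' : ∀ b ∈ B, ∀ N : ℕ, dist (b • o) o ≤ 2 * R + dist (b ^ (2 ^ N) • o) o / 2 ^ N := by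
    intro b hb N
    obtain ⟨y, hyY, hyd⟩ := claim1 b hb N o hoY
    obtain ⟨c, hc, hcd⟩ := hR y hyY
    have h1 : dist (b • o) o = dist (b • c • o) (c • o) := by
      rw [smul_smul, hBcomm b hb c hc, ← smul_smul, dist_smul]
    have h2 := dist_triangle4 (b • c • o) (b • y) y (c • o)
    rw [dist_smul, dist_comm (c • o) y] at h2
    linarith
  refine ⟨4 * R + 1, by positivity, ?_⟩
  intro a ha
  have haB := hAB a ha
  let S : X → X := fun x => σ (a⁻¹ • x) (a • x) (1/2)
  have hSB : ∀ b ∈ B, ∀ x, S (b • x) = b • S x := by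
    intro b hb x
    change σ _ _ _ = b • σ _ _ _
    rw [hequiv _ _ _ _ hhalf, smul_smul, smul_smul, smul_smul, smul_smul,
      hBcomm b hb a haB, hBcomm b hb _ (inv_mem haB)]
  have hSLip : ∀ x y, dist (S x) (S y) ≤ dist x y := by
    intro x y
    have := sib_mid_conv hσ (a⁻¹ • x) (a • x) (a⁻¹ • y) (a • y)
    rw [dist_smul, dist_smul] at this
    change dist (σ _ _ _) (σ _ _ _) ≤ _
    linarith
  obtain ⟨b, hb, hbd⟩ := hR (S o) (hYmid o hoY _ (inv_mem haB) _ haB)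
  have hdrift : ∀ N : ℕ, dist (S^[N] o) (b ^ N • o) ≤ N * R := by
    intro N
    induction N with
    | zero => simp
    | succ N ih =>
      rw [Function.iterate_succ_apply']
      have h1 := hSLip (S^[N] o) (b ^ N • o)
      have h2 : dist (S (b ^ N • o)) (b ^ (N+1) • o) ≤ R := by
        rw [hSB _ (pow_mem hb N), pow_succ, ← smul_smul, dist_smul]; exact hbd
      have h3 := dist_triangle (S (S^[N] o)) (S (b ^ N • o)) (b ^ (N+1) • o)
      push_cast
      linarith
  set l := dist (a • o) o with hl
  have hl0 : 0 ≤ l := dist_nonneg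
  have hpow : ∀ i : ℕ, dist (a ^ i • o) o ≤ i * l := by
    intro i
    induction i with
    | zero => simp
    | succ i ih =>
      have h3 := dist_triangle (a ^ (i+1) • o) (a ^ i • o) o
      rw [pow_succ, ← smul_smul, dist_smul] at h3
      rw [pow_succ, ← smul_smul]
      push_cast
      linarith
  have hzpow : ∀ i : ℤ, dist (a ^ i • o) o ≤ |(i:ℝ)| * l := by
    intro i
    obtain ⟨k, rfl | rfl⟩ := i.eq_nat_or_neg
    · simpa using hpow k
    · have h1 : dist (a ^ (-(k:ℤ)) • o) o = dist (a ^ k • o) o := by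
        rw [← dist_smul (a ^ k), smul_smul, zpow_neg, zpow_natCast, mul_inv_cancel, one_smul,
          dist_comm]
      rw [h1]
      simpa using hpow k
  -- square-root drift
  have hsq : ∀ lam : ℝ, 0 < lam → ∀ N : ℕ, ∀ i : ℤ,
      dist (a ^ i • S^[N] o) o ≤ l / 2 * (lam * ((i:ℝ)^2 + N) + 1 / lam) := by
    intro lam hlam N
    induction N with
    | zero =>
      intro i
      refine (hzpow i).trans ?_
      have h1 : |(i:ℝ)| ≤ (lam * (i:ℝ)^2 + 1 / lam) / 2 := by
        have h2 : 0 ≤ (lam * |(i:ℝ)| - 1)^2 / lam := by positivity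
        have h3 : (lam * |(i:ℝ)| - 1)^2 / lam = lam * (i:ℝ)^2 + 1/lam - 2 * |(i:ℝ)| := by
          rw [← sq_abs (i:ℝ)]; field_simp; ring
        linarith
      simp only [Function.iterate_zero, id, Nat.cast_zero, add_zero]
      nlinarith
    | succ N ih =>
      intro i
      rw [Function.iterate_succ_apply']
      have h1 : a ^ i • S (S^[N] o) = σ (a ^ (i-1) • S^[N] o) (a ^ (i+1) • S^[N] o) (1/2) := by
        change a ^ i • σ _ _ _ = _
        rw [hequiv _ _ _ _ hhalf, smul_smul, smul_smul, zpow_sub_one, zpow_add_one]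
      rw [h1]
      refine (sib_mid_dist hσ _ _ _).trans ?_
      have h2 := ih (i-1)
      have h3 := ih (i+1)
      push_cast at h2 h3 ⊢
      have h4 : l / 2 * (lam * ((i:ℝ)^2 + (N+1)) + 1 / lam) =
        (l / 2 * (lam * (((i:ℝ)-1)^2 + N) + 1 / lam)
          + l / 2 * (lam * (((i:ℝ)+1)^2 + N) + 1 / lam)) / 2 := by ring
      rw [h4]
      linarith
  obtain ⟨M, hM⟩ := exists_nat_gt (l * (l + 1))
  have hM2 : (M:ℝ) < 2 ^ M := by exact_mod_cast Nat.lt_two_pow_self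
  have h2M : (0:ℝ) < 2 ^ M := by positivity
  have h1 := hsq (1 / (l+1)) (by positivity) (2^M) 0
  have h2 := hdrift (2^M)
  have h3 := claim1' b hb M
  rw [zpow_zero, one_smul] at h1
  have h4 := dist_triangle (b ^ 2 ^ M • o) (S^[2^M] o) o
  rw [dist_comm (b ^ 2 ^ M • o) (S^[2^M] o)] at h4
  have h5 : dist (b ^ 2 ^ M • o) o / 2 ^ M ≤ R + 1 := by
    rw [div_le_iff₀ h2M]
    push_cast at h2
    have h6 : l / 2 * (1 / (l+1) * (((0:ℤ):ℝ)^2 + ((2^M : ℕ) : ℝ)) + 1 / (1 / (l+1))) ≤ 2 ^ M := by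
      push_cast
      have h7 : l / (l+1) ≤ 1 := by rw [div_le_one (by positivity)]; linarith
      have h8 : l / 2 * (1 / (l+1) * ((0:ℝ)^2 + 2^M) + 1 / (1 / (l+1)))
        = (l / (l+1) * 2^M + l * (l+1)) / 2 := by field_simp; ring
      have h9 : l / (l+1) * 2^M ≤ 1 * 2^M := mul_le_mul_of_nonneg_right h7 h2M.le
      rw [h8]
      linarith
    linarith
  have h6 := dist_triangle (S o) (b • o) o
  change dist (S o) o ≤ _
  linarith

end act

/-! ### The metric `d_o` -/

theorem sib_dO_summable (ξ ζ : ℝ → X) : Summable (fun n : ℕ =>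
    (1 / 2 : ℝ) ^ (n + 1) * min (dist (ξ ((n : ℝ) + 1)) (ζ ((n : ℝ) + 1))) 1) := by
  have hg : Summable (fun n : ℕ => (1 / 2 : ℝ) ^ (n + 1)) :=
    (summable_nat_add_iff 1).mpr (summable_geometric_of_lt_one (by norm_num) (by norm_num))
  refine Summable.of_nonneg_of_le (fun n => ?_) (fun n => ?_) hg
  · exact mul_nonneg (by positivity) (le_min dist_nonneg zero_le_one)
  · exact mul_le_of_le_one_right (by positivity) (min_le_right _ _)

theorem sib_ray_ext {σ : X → X → ℝ → X} {ξ ζ : ℝ → X}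
    (hξ : IsRay σ ξ) (hζ : IsRay σ ζ) (h0 : ξ 0 = ζ 0)
    (h : ∀ n : ℕ, ξ ((n:ℝ) + 1) = ζ ((n:ℝ) + 1)) : ξ = ζ := by
  funext t
  rcases le_or_gt t 0 with ht | ht
  · rw [hξ.1 t ht, hζ.1 t ht, h0]
  · obtain ⟨n, hn⟩ := exists_nat_gt t
    have hn1 : (0:ℝ) < (n:ℝ) + 1 := by positivity
    have hmem : t / ((n:ℝ)+1) ∈ Set.Icc (0:ℝ) 1 :=
      ⟨by positivity, by rw [div_le_one hn1]; linarith⟩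
    have h1 := hξ.2.2 ((n:ℝ)+1) hn1.le _ hmem
    have h2 := hζ.2.2 ((n:ℝ)+1) hn1.le _ hmem
    rw [div_mul_cancel₀ _ hn1.ne'] at h1 h2
    rw [← h1, ← h2, h0, h n]

theorem sib_dO_metric {σ : X → X → ℝ → X} (o : X) (ξ ζ θ : ℝ → X)
    (hξ : IsRay σ ξ) (hζ : IsRay σ ζ) (h0 : ξ 0 = o) (h1 : ζ 0 = o) :
    0 ≤ dO o ξ ζ ∧ (dO o ξ ζ = 0 ↔ ξ = ζ) ∧ dO o ξ ζ = dO o ζ ξ ∧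
          dO o ξ θ ≤ dO o ξ ζ + dO o ζ θ := by
  have hnn : ∀ n : ℕ, 0 ≤ (1 / 2 : ℝ) ^ (n + 1) *
      min (dist (ξ ((n : ℝ) + 1)) (ζ ((n : ℝ) + 1))) 1 := fun n =>
    mul_nonneg (by positivity) (le_min dist_nonneg zero_le_one)
  refine ⟨tsum_nonneg hnn, ⟨fun h => ?_, ?_⟩, ?_, ?_⟩
  · apply sib_ray_ext hξ hζ (h0.trans h1.symm)
    intro n
    have h2 := (hasSum_zero_iff_of_nonneg hnn).mp (by
      have h5 := (sib_dO_summable ξ ζ).hasSum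
      rw [show ∑' _, _ = (0:ℝ) from h] at h5
      exact h5)
    have h3 := congrFun h2 n
    simp only [Pi.zero_apply, mul_eq_zero] at h3
    rcases h3 with h3 | h3
    · exact absurd h3 (by positivity)
    · rcases min_choice (dist (ξ ((n : ℝ) + 1)) (ζ ((n : ℝ) + 1))) 1 with h4 | h4
      · rw [h4] at h3; exact dist_eq_zero.mp h3
      · rw [h4] at h3; norm_num at h3
  · rintro rfl
    simp [dO]
  · simp only [dO, dist_comm]
  · rw [dO, dO, dO, ← (sib_dO_summable ξ ζ).tsum_add (sib_dO_summable ζ θ)]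
    refine (sib_dO_summable ξ θ).tsum_le_tsum (fun n => ?_)
      ((sib_dO_summable ξ ζ).add (sib_dO_summable ζ θ))
    rw [← mul_add]
    refine mul_le_mul_of_nonneg_left ?_ (by positivity)
    have h2 := dist_triangle (ξ ((n:ℝ)+1)) (ζ ((n:ℝ)+1)) (θ ((n:ℝ)+1))
    have h3 : 0 ≤ dist (ξ ((n:ℝ)+1)) (ζ ((n:ℝ)+1)) := dist_nonneg
    have h4 : 0 ≤ dist (ζ ((n:ℝ)+1)) (θ ((n:ℝ)+1)) := dist_nonneg
    simp only [min_def]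
    split_ifs <;> linarith

theorem sib_dO_le : ∃ S : ℝ, 0 < S ∧ ∀ (X : Type _) [MetricSpace X] (o : X) (ξ ζ : ℝ → X) (c : ℝ),
    0 ≤ c → (∀ t, 0 ≤ t → dist (ξ t) (ζ t) ≤ t * c) → dO o ξ ζ ≤ S * c := by
  have hs : Summable (fun n : ℕ => (1 / 2 : ℝ) ^ (n + 1) * ((n:ℝ) + 1)) := by
    have h := summable_pow_mul_geometric_of_norm_lt_one 1 (r := (1/2 : ℝ)) (by norm_num)
    have h2 := (summable_nat_add_iff 1).mpr h
    refine h2.congr (fun n => ?_)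
    push_cast; ring
  refine ⟨(∑' n : ℕ, (1 / 2 : ℝ) ^ (n + 1) * ((n:ℝ) + 1)) + 1, ?_, ?_⟩
  · have : 0 ≤ ∑' n : ℕ, (1 / 2 : ℝ) ^ (n + 1) * ((n:ℝ) + 1) :=
      tsum_nonneg (fun n => by positivity)
    linarith
  · intro X _ o ξ ζ c hc h
    have h1 : dO o ξ ζ ≤ (∑' n : ℕ, (1 / 2 : ℝ) ^ (n + 1) * ((n:ℝ) + 1)) * c := by
      rw [dO, ← tsum_mul_right]
      refine (sib_dO_summable ξ ζ).tsum_le_tsum (fun n => ?_) (hs.mul_right c)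
      rw [mul_assoc]
      refine mul_le_mul_of_nonneg_left ?_ (by positivity)
      exact (min_le_left _ _).trans (h _ (by positivity))
    linarith

/-! ### Coarse flats and their rays -/

theorem sib_le_of_forall_div {a b C s : ℝ} (h : ∀ r : ℝ, 0 < r → s ≤ r → a ≤ b + C / r) :
    a ≤ b := by
  by_contra hab
  push Not at hab
  set r := max (max s 1) ((|C| + 1) / (a - b)) with hr
  have hr0 : 0 < r := lt_of_lt_of_le one_pos ((le_max_right _ _).trans (le_max_left _ _))
  have h1 := h r hr0 ((le_max_left _ _).trans (le_max_left _ _))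
  have h2 : (|C| + 1) / (a - b) ≤ r := le_max_right _ _
  rw [div_le_iff₀ (by linarith)] at h2
  have h3 : a - b ≤ C / r := by linarith
  rw [le_div_iff₀ hr0] at h3
  have := le_abs_self C
  linarith

theorem sib_coarse_line {E : Type*} [NormedAddCommGroup E] [NormedSpace ℝ E]
    (σ : X → X → ℝ → X) (hσ : IsCCC σ) (o : X) (P : E → X) (hP0 : P 0 = o)
    (L C R : ℝ) (hL : 0 ≤ L) (hlip : ∀ x y, dist (P x) (P y) ≤ L * ‖x - y‖ + C)
    (hmid : ∀ x y, dist (σ (P x) (P y) (1/2)) (P ((1/2 : ℝ) • (x + y))) ≤ R)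
    (x : E) (t : ℝ) (ht : t ∈ Set.Icc (0:ℝ) 1) :
    dist (σ o (P x) t) (P (t • x)) ≤ 2 * R := by
  set φ : ℝ → ℝ := fun t => dist (σ o (P x) t) (P (t • x)) with hφ
  have hone : (1:ℝ) ∈ Set.Icc (0:ℝ) 1 := ⟨zero_le_one, le_refl _⟩
  have hzero : (0:ℝ) ∈ Set.Icc (0:ℝ) 1 := ⟨le_refl _, zero_le_one⟩
  have hhalf : (1/2 : ℝ) ∈ Set.Icc (0:ℝ) 1 := ⟨by norm_num, by norm_num⟩
  have hbdd : BddAbove (φ '' Set.Icc (0:ℝ) 1) := by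
    refine ⟨dist o (P x) + (L * ‖x‖ + C), ?_⟩
    rintro _ ⟨s, hs, rfl⟩
    have h1 := hσ.1.2.2.2 o (P x) s hs 0 hzero
    rw [hσ.1.2.1, sub_zero, abs_of_nonneg hs.1] at h1
    have h2 := hlip 0 (s • x)
    rw [hP0, zero_sub, norm_neg, norm_smul, Real.norm_eq_abs, abs_of_nonneg hs.1] at h2
    have h3 : s * ‖x‖ ≤ ‖x‖ := mul_le_of_le_one_left (norm_nonneg _) hs.2
    have h4 : s * dist o (P x) ≤ dist o (P x) := mul_le_of_le_one_left dist_nonneg hs.2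
    have h5 := dist_triangle (σ o (P x) s) o (P (s • x))
    have h6 : L * (s * ‖x‖) ≤ L * ‖x‖ := mul_le_mul_of_nonneg_left h3 hL
    change dist _ _ ≤ _
    linarith
  set M := sSup (φ '' Set.Icc (0:ℝ) 1) with hM
  have hφM : ∀ s ∈ Set.Icc (0:ℝ) 1, φ s ≤ M := fun s hs =>
    le_csSup hbdd (Set.mem_image_of_mem _ hs)
  have hφ0 : φ 0 = 0 := by simp [hφ, hσ.1.2.1, hP0]
  have hφ1 : φ 1 = 0 := by simp [hφ, hσ.1.2.2.1]
  have hstep : ∀ s ∈ Set.Icc (0:ℝ) 1, ∀ u ∈ Set.Icc (0:ℝ) 1, s ≤ u →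
      φ ((s + u) / 2) ≤ (φ s + φ u) / 2 + R := by
    intro s hs u hu hsu
    have h1 := hσ.2.1 o (P x) s u (1/2) hs.1 hsu hu.2 hhalf
    have h2 : (1 - 1/2) * s + 1/2 * u = (s + u) / 2 := by ring
    rw [h2] at h1
    have h3 := sib_mid_conv hσ (σ o (P x) s) (σ o (P x) u) (P (s • x)) (P (u • x))
    have h4 := hmid (s • x) (u • x)
    have h5 : (1/2 : ℝ) • (s • x + u • x) = ((s + u) / 2) • x := by
      rw [← add_smul, smul_smul]; congr 1; ring
    rw [h5] at h4
    rw [h1] at h3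
    exact (dist_triangle _ _ _).trans (add_le_add h3 h4)
  have hMle : M ≤ M / 2 + R := by
    apply csSup_le ⟨_, Set.mem_image_of_mem _ hzero⟩
    rintro _ ⟨s, hs, rfl⟩
    rcases le_total s (1/2) with h | h
    · have hm : 2 * s ∈ Set.Icc (0:ℝ) 1 := ⟨by linarith [hs.1], by linarith⟩
      have h1 := hstep 0 hzero (2*s) hm hm.1
      rw [show (0 + 2 * s) / 2 = s by ring, hφ0] at h1
      have := hφM _ hm
      linarith
    · have hm : 2 * s - 1 ∈ Set.Icc (0:ℝ) 1 := ⟨by linarith, by linarith [hs.2]⟩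
      have h1 := hstep (2*s-1) hm 1 hone hm.2
      rw [show (2 * s - 1 + 1) / 2 = s by ring, hφ1] at h1
      have := hφM _ hm
      linarith
  have := hφM t ht
  change φ t ≤ _
  linarith

theorem sib_flat_limit {E : Type*} [NormedAddCommGroup E] [NormedSpace ℝ E] [CompleteSpace X]
    (σ : X → X → ℝ → X) (hσ : IsCCC σ) (o : X) (P : E → X)
    (R : ℝ) (hR : 0 ≤ R)
    (hline : ∀ x, ∀ t ∈ Set.Icc (0:ℝ) 1, dist (σ o (P x) t) (P (t • x)) ≤ R)
    (x : E) (s : ℝ) (hs : 0 ≤ s) :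
    ∃ p : X, ∀ r : ℝ, 0 < r → s ≤ r → dist p (σ o (P (r • x)) (s / r)) ≤ s * R / r := by
  have hcomp : ∀ r r' : ℝ, 0 < r → s ≤ r → r ≤ r' →
      dist (σ o (P (r' • x)) (s / r')) (σ o (P (r • x)) (s / r)) ≤ s * R / r := by
    intro r r' hr hsr hrr
    have hr' : 0 < r' := lt_of_lt_of_le hr hrr
    have hm : r / r' ∈ Set.Icc (0:ℝ) 1 := ⟨by positivity, by rw [div_le_one hr']; exact hrr⟩
    have hm' : s / r ∈ Set.Icc (0:ℝ) 1 := ⟨by positivity, by rw [div_le_one hr]; exact hsr⟩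
    have h1 := hline (r' • x) _ hm
    rw [smul_smul, div_mul_cancel₀ _ hr'.ne'] at h1
    have h2 := hσ.2.1 o (P (r' • x)) 0 (r / r') (s / r) le_rfl hm.1 hm.2 hm'
    rw [hσ.1.2.1, mul_zero, zero_add, div_mul_div_cancel₀ hr.ne'] at h2
    rw [← h2]
    have h3 := hσ.2.2 o (σ o (P (r' • x)) (r / r')) o (P (r • x)) _ hm'
    rw [dist_self, mul_zero, zero_add] at h3
    refine h3.trans ?_
    rw [mul_div_right_comm]
    exact mul_le_mul_of_nonneg_left h1 hm'.1
  let u : ℕ → X := fun k => σ o (P ((s + 1 + k : ℝ) • x)) (s / (s + 1 + k))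
  have hu : CauchySeq u := by
    refine cauchySeq_of_le_tendsto_0' (fun k : ℕ => s * R / (s + 1 + k)) ?_ ?_
    · intro n m hnm
      rw [dist_comm]
      have hnm' : (n:ℝ) ≤ m := by exact_mod_cast hnm
      exact hcomp _ _ (by positivity) (by have : (0:ℝ) ≤ n := by positivity
                                          linarith) (by linarith)
    · apply Filter.Tendsto.const_div_atTop
      exact Filter.tendsto_atTop_add_const_left _ _ tendsto_natCast_atTop_atTop
  obtain ⟨p, hp⟩ := cauchySeq_tendsto_of_complete hu
  refine ⟨p, fun r hr hsr => ?_⟩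
  refine le_of_tendsto (hp.dist tendsto_const_nhds) ?_
  obtain ⟨K, hK⟩ := exists_nat_gt r
  filter_upwards [Filter.eventually_ge_atTop K] with k hk
  have : (K:ℝ) ≤ k := by exact_mod_cast hk
  exact hcomp r _ hr hsr (by linarith)

theorem sib_flat_rays {E : Type*} [NormedAddCommGroup E] [NormedSpace ℝ E] [ProperSpace E]
    [CompleteSpace X]
    (σ : X → X → ℝ → X) (hσ : IsCCC σ) (o : X) (P : E → X) (hP0 : P 0 = o)
    (L C R : ℝ) (hL : 0 ≤ L) (hC : 0 ≤ C) (hR : 0 ≤ R)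
    (hlip : ∀ x y, dist (P x) (P y) ≤ L * ‖x - y‖ + C)
    (hmid : ∀ x y, dist (σ (P x) (P y) (1/2)) (P ((1/2 : ℝ) • (x + y))) ≤ R)
    (hprop : ∀ r : ℝ, ∃ M : ℝ, ∀ x y, dist (P x) (P y) ≤ r → ‖x - y‖ ≤ M) :
    ∃ F : Metric.sphere (0 : E) 1 → {ξ : ℝ → X // IsRay σ ξ ∧ ξ 0 = o},
      Function.Injective F ∧
      (∀ v : Metric.sphere (0 : E) 1, ∀ ε : ℝ, 0 < ε →
        ∃ δ : ℝ, 0 < δ ∧ ∀ w : Metric.sphere (0 : E) 1,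
          dist v w < δ → dO o (F v).1 (F w).1 < ε) ∧
      ((∃ D : ℝ, ∀ z : X, ∃ x : E, dist z (P x) ≤ D) → Function.Surjective F) := by
  have hline := sib_coarse_line σ hσ o P hP0 L C R hL hlip hmid
  set R' := 2 * R with hR'
  have hR'0 : 0 ≤ R' := by positivity
  have hex : ∀ (x : E) (s : ℝ), ∃ p : X, 0 ≤ s → ∀ r : ℝ, 0 < r → s ≤ r →
      dist p (σ o (P (r • x)) (s / r)) ≤ s * R' / r := by
    intro x s
    by_cases hs : 0 ≤ s
    · obtain ⟨p, hp⟩ := sib_flat_limit σ hσ o P R' hR'0 hline x s hs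
      exact ⟨p, fun _ => hp⟩
    · exact ⟨o, fun h => absurd h hs⟩
  choose η hη using hex
  have hmem : ∀ s r : ℝ, 0 ≤ s → 0 < r → s ≤ r → s / r ∈ Set.Icc (0:ℝ) 1 := fun s r hs hr hsr =>
    ⟨by positivity, by rw [div_le_one hr]; exact hsr⟩
  have hη0 : ∀ x, η x 0 = o := by
    intro x
    have h := hη x 0 le_rfl 1 one_pos zero_le_one
    rw [zero_div, hσ.1.2.1, zero_mul, zero_div] at h
    exact dist_le_zero.mp h
  have hηP : ∀ x s, 0 ≤ s → dist (η x s) (P (s • x)) ≤ R' := by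
    intro x s hs
    rcases hs.eq_or_lt with rfl | hs
    · rw [hη0, zero_smul, hP0, dist_self]; exact hR'0
    · have h := hη x s hs.le s hs le_rfl
      rwa [div_self hs.ne', hσ.1.2.2.1, mul_div_cancel_left₀ _ hs.ne'] at h
  set N : E → ℝ := fun x => dist o (η x 1) with hN
  have happrox : ∀ x s s' r, 0 ≤ s → 0 ≤ s' → 0 < r → s ≤ r → s' ≤ r →
      |dist (η x s) (η x s') - |s - s'| / r * dist o (P (r • x))| ≤ (s + s') * R' / r := by
    intro x s s' r hs hs' hr hsr hsr'
    have h1 := hη x s hs r hr hsr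
    have h2 := hη x s' hs' r hr hsr'
    have h3 := hσ.1.2.2.2 o (P (r • x)) _ (hmem s r hs hr hsr) _ (hmem s' r hs' hr hsr')
    rw [← sub_div, abs_div, abs_of_pos hr] at h3
    rw [← h3, add_mul, add_div]
    have h4 := dist_triangle4 (η x s) (σ o (P (r • x)) (s / r)) (σ o (P (r • x)) (s' / r)) (η x s')
    have h5 := dist_triangle4 (σ o (P (r • x)) (s / r)) (η x s) (η x s') (σ o (P (r • x)) (s' / r))
    rw [dist_comm (σ _ _ _) (η x s')] at h4
    rw [dist_comm (σ _ _ _) (η x s)] at h5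
    rw [abs_le]
    constructor <;> linarith
  have hηdist : ∀ x s s', 0 ≤ s → 0 ≤ s' → dist (η x s) (η x s') = |s - s'| * N x := by
    intro x s s' hs hs'
    have hgen : ∀ r, 0 < r → max (max s s') 1 ≤ r →
        |dist (η x s) (η x s') - |s - s'| * N x| ≤
          0 + ((s + s') * R' + |s - s'| * R') / r := by
      intro r hr hsr
      have hs1 : s ≤ r := (le_max_left _ _).trans ((le_max_left _ _).trans hsr)
      have hs2 : s' ≤ r := (le_max_right _ _).trans ((le_max_left _ _).trans hsr)
      have h1r : 1 ≤ r := (le_max_right _ _).trans hsr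
      have h1 := happrox x s s' r hs hs' hr hs1 hs2
      have h2 := happrox x 0 1 r le_rfl zero_le_one hr hr.le h1r
      rw [hη0] at h2
      have h3 : |dist o (P (r • x)) / r - N x| ≤ R' / r := by
        rw [abs_sub_comm]
        convert h2 using 2 <;> simp [hN]
        ring
      have h4 : dist (η x s) (η x s') - |s - s'| * N x =
        (dist (η x s) (η x s') - |s - s'| / r * dist o (P (r • x))) +
          |s - s'| * (dist o (P (r • x)) / r - N x) := by ring
      rw [h4, zero_add, add_div]
      refine (abs_add_le _ _).trans (add_le_add h1 ?_)
      rw [abs_mul, abs_abs, mul_div_assoc]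
      exact mul_le_mul_of_nonneg_left h3 (abs_nonneg _)
    have := sib_le_of_forall_div hgen
    exact sub_eq_zero.mp (abs_nonpos_iff.mp this)
  have hηray : ∀ x s t, 0 ≤ t → s ∈ Set.Icc (0:ℝ) 1 → σ o (η x t) s = η x (s * t) := by
    intro x s t ht hs
    have hst : 0 ≤ s * t := mul_nonneg hs.1 ht
    have hst' : s * t ≤ t := mul_le_of_le_one_left ht hs.2
    have hgen : ∀ r, 0 < r → t ≤ r → dist (σ o (η x t) s) (η x (s * t)) ≤
        0 + (2 * (s * t * R')) / r := by
      intro r hr htr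
      have h1 := hη x t ht r hr htr
      have h2 := hη x (s * t) hst r hr (hst'.trans htr)
      have h3 := hσ.2.1 o (P (r • x)) 0 (t / r) s le_rfl (hmem t r ht hr htr).1
        (hmem t r ht hr htr).2 hs
      rw [hσ.1.2.1, mul_zero, zero_add, ← mul_div_assoc] at h3
      have h4 := hσ.2.2 o (η x t) o (σ o (P (r • x)) (t / r)) s hs
      rw [dist_self, mul_zero, zero_add, h3] at h4
      have h5 := mul_le_mul_of_nonneg_left h1 hs.1
      have h6 := dist_triangle_right (σ o (η x t) s) (η x (s * t)) (σ o (P (r • x)) (s * t / r))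
      have h7 : s * (t * R' / r) = s * t * R' / r := by ring
      have h8 : 0 + (2 * (s * t * R')) / r = s * t * R' / r + s * t * R' / r := by ring
      linarith
    exact dist_le_zero.mp (sib_le_of_forall_div hgen)
  have hηlip : ∀ x y s, 0 ≤ s → dist (η x s) (η y s) ≤ s * (L * ‖x - y‖) := by
    intro x y s hs
    have hgen : ∀ r, 0 < r → s ≤ r → dist (η x s) (η y s) ≤
        s * (L * ‖x - y‖) + (2 * (s * R') + s * C) / r := by
      intro r hr hsr
      have h1 := hη x s hs r hr hsr
      have h2 := hη y s hs r hr hsr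
      have hm := hmem s r hs hr hsr
      have h3 := hσ.2.2 o (P (r • x)) o (P (r • y)) _ hm
      rw [dist_self, mul_zero, zero_add] at h3
      have h4 := mul_le_mul_of_nonneg_left (hlip (r • x) (r • y)) hm.1
      rw [← smul_sub, norm_smul, Real.norm_eq_abs, abs_of_pos hr] at h4
      have h5 : s / r * (L * (r * ‖x - y‖) + C) = s * (L * ‖x - y‖) + s * C / r := by
        field_simp
      have h6 := dist_triangle4 (η x s) (σ o (P (r • x)) (s / r)) (σ o (P (r • y)) (s / r)) (η y s)
      rw [dist_comm (σ _ _ _) (η y s)] at h6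
      have h7 : (2 * (s * R') + s * C) / r = s * R' / r + s * R' / r + s * C / r := by ring
      linarith
    exact sib_le_of_forall_div hgen
  have hNpos : ∀ x : E, x ≠ 0 → 0 < N x := by
    intro x hx
    by_contra hcon
    have hN0 : N x = 0 := le_antisymm (not_lt.mp hcon) dist_nonneg
    obtain ⟨M, hM⟩ := hprop R'
    have hx' : 0 < ‖x‖ := norm_pos_iff.mpr hx
    have hs : 0 ≤ (|M| + 1) / ‖x‖ := by positivity
    have h1 := hηP x _ hs
    have h2 := hηdist x ((|M| + 1) / ‖x‖) 0 hs le_rfl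
    rw [hN0, mul_zero, hη0] at h2
    rw [dist_eq_zero.mp h2, ← hP0] at h1
    have h3 := hM _ _ h1
    rw [zero_sub, norm_neg, norm_smul, Real.norm_eq_abs, abs_of_nonneg hs,
      div_mul_cancel₀ _ hx'.ne'] at h3
    linarith [le_abs_self M]
  have hNlip : ∀ x y, |N x - N y| ≤ L * ‖x - y‖ := by
    intro x y
    have h1 := hηlip x y 1 zero_le_one
    rw [one_mul] at h1
    have h2 := abs_dist_sub_le (η x 1) (η y 1) o
    rw [dist_comm _ o, dist_comm _ o] at h2
    exact h2.trans h1
  have hsph : ∀ v : Metric.sphere (0:E) 1, (v:E) ≠ 0 := by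
    intro v h
    have := norm_eq_of_mem_sphere v
    rw [h, norm_zero] at this
    exact zero_ne_one this
  let ξ : E → ℝ → X := fun x t => η x (max t 0 / N x)
  have hξt : ∀ x t, 0 ≤ t → ξ x t = η x (t / N x) := by
    intro x t ht
    change η x (max t 0 / N x) = _
    rw [max_eq_left ht]
  have hξray : ∀ x : E, x ≠ 0 → IsRay σ (ξ x) ∧ ξ x 0 = o := by
    intro x hx
    have hNx := hNpos x hx
    have h0 : ξ x 0 = o := by rw [hξt x 0 le_rfl, zero_div, hη0]
    refine ⟨⟨?_, ?_, ?_⟩, h0⟩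
    · intro t ht
      change η x (max t 0 / N x) = η x (max 0 0 / N x)
      rw [max_eq_right ht, max_self]
    · intro s t hs ht
      rw [hξt x s hs, hξt x t ht, hηdist x _ _ (by positivity) (by positivity), ← sub_div,
        abs_div, abs_of_pos hNx, div_mul_cancel₀ _ hNx.ne']
    · intro t ht s hs
      rw [h0, hξt x t ht, hξt x _ (mul_nonneg hs.1 ht), hηray x s _ (by positivity) hs,
        mul_div_assoc]
  refine ⟨fun v => ⟨ξ v, hξray v (hsph v)⟩, ?_, ?_, ?_⟩
  · -- injectivity
    intro v w hvw
    have hvw' : ξ v = ξ w := congrArg Subtype.val hvw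
    have hNv := hNpos v (hsph v)
    have hNw := hNpos w (hsph w)
    obtain ⟨M, hM⟩ := hprop (R' + R')
    have h1 : ∀ t, 0 ≤ t → t * ‖(1 / N v) • (v:E) - (1 / N w) • (w:E)‖ ≤ M := by
      intro t ht
      have ha := hηP v (t / N v) (by positivity)
      have hb := hηP w (t / N w) (by positivity)
      rw [← hξt v t ht, hvw', hξt w t ht, dist_comm] at ha
      have h2 := hM _ _ ((dist_triangle _ _ _).trans (add_le_add ha hb))
      have h3 : (t / N v) • (v:E) - (t / N w) • (w:E)
          = t • ((1 / N v) • (v:E) - (1 / N w) • (w:E)) := by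
        rw [smul_sub, smul_smul, smul_smul, mul_one_div, mul_one_div]
      rw [h3, norm_smul, Real.norm_eq_abs, abs_of_nonneg ht] at h2
      exact h2
    have h2 : (1 / N v) • (v:E) = (1 / N w) • (w:E) := by
      by_contra hne
      have hpos : 0 < ‖(1 / N v) • (v:E) - (1 / N w) • (w:E)‖ := norm_pos_iff.mpr (sub_ne_zero.mpr hne)
      have h3 := h1 ((|M| + 1) / ‖(1 / N v) • (v:E) - (1 / N w) • (w:E)‖) (by positivity)
      rw [div_mul_cancel₀ _ hpos.ne'] at h3
      linarith [le_abs_self M]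
    have h3 := congrArg norm h2
    rw [norm_smul, norm_smul, norm_eq_of_mem_sphere, norm_eq_of_mem_sphere, mul_one, mul_one,
      Real.norm_of_nonneg (by positivity), Real.norm_of_nonneg (by positivity)] at h3
    rw [h3] at h2
    have h4 : (1 / N w) ≠ 0 := by positivity
    exact Subtype.ext (smul_right_injective E h4 h2)
  · -- continuity
    intro v ε hε
    obtain ⟨S, hS0, hS⟩ := sib_dO_le
    have hNv := hNpos v (hsph v)
    refine ⟨ε / (S * (2 * L / N v + 1)), by positivity, ?_⟩
    intro w hw
    have hNw := hNpos w (hsph w)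
    have hd : dist v w = ‖(v:E) - w‖ := by rw [Subtype.dist_eq, dist_eq_norm]
    have h1 : ∀ t, 0 ≤ t → dist (ξ v t) (ξ w t) ≤ t * ((2 * L / N v + 1) * dist v w) := by
      intro t ht
      rw [hξt v t ht, hξt w t ht, hd]
      have ha := hηlip v w (t / N v) (by positivity)
      have hb := hηdist w (t / N v) (t / N w) (by positivity) (by positivity)
      have hc : |t / N v - t / N w| * N w = t / N v * |N v - N w| := by
        have : t / N v - t / N w = (t / N v) * ((N w - N v) / N w) := by field_simp
        rw [this, abs_mul, abs_div (N w - N v), abs_of_pos hNw, abs_of_nonneg (by positivity : 0 ≤ t / N v),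
          mul_assoc, div_mul_cancel₀ _ hNw.ne', abs_sub_comm]
      have h2 : t / N v * |N v - N w| ≤ t / N v * (L * ‖(v:E) - w‖) :=
        mul_le_mul_of_nonneg_left (hNlip v w) (by positivity)
      have h3 := dist_triangle (η v (t / N v)) (η w (t / N v)) (η w (t / N w))
      have h4 : t * ((2 * L / N v + 1) * ‖(v:E) - w‖) =
        t / N v * (L * ‖(v:E) - w‖) + t / N v * (L * ‖(v:E) - w‖) + t * ‖(v:E) - w‖ := by
        field_simp; ring
      have h5 : 0 ≤ t * ‖(v:E) - w‖ := by positivity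
      linarith
    have h2 := hS X o (ξ v) (ξ w) ((2 * L / N v + 1) * dist v w) (by positivity) h1
    refine lt_of_le_of_lt h2 ?_
    rw [← mul_assoc, mul_comm]
    rwa [lt_div_iff₀ (by positivity)] at hw
  · -- surjectivity
    rintro ⟨D, hD⟩ ⟨ζ, hζ, hζ0⟩
    have hDn : 0 ≤ D := by
      obtain ⟨x, hx⟩ := hD o
      exact dist_nonneg.trans hx
    choose V hV using fun k : ℕ => hD (ζ k)
    have hk : ∀ k : ℕ, (k:ℝ) ≤ L * ‖V k‖ + (C + D) := by
      intro k
      have h1 := hζ.2.1 0 k le_rfl (by positivity)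
      rw [hζ0, zero_sub, abs_neg, abs_of_nonneg (by positivity)] at h1
      have h2 := hlip 0 (V k)
      rw [hP0, zero_sub, norm_neg] at h2
      have h3 := dist_triangle_right o (ζ k) (P (V k))
      have h4 := hV k
      linarith
    have hL0 : 0 < L := by
      by_contra h
      have hL' : L = 0 := le_antisymm (not_lt.mp h) hL
      obtain ⟨k, hkk⟩ := exists_nat_gt (C + D)
      have := hk k
      rw [hL', zero_mul] at this
      linarith
    have hVtop : Filter.Tendsto (fun k => ‖V k‖) Filter.atTop Filter.atTop := by
      have h1 : Filter.Tendsto (fun k : ℕ => ((k:ℝ) - (C + D)) / L) Filter.atTop Filter.atTop :=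
        (Filter.tendsto_atTop_add_const_right _ _ tendsto_natCast_atTop_atTop).atTop_div_const hL0
      refine Filter.tendsto_atTop_mono (fun k => ?_) h1
      rw [div_le_iff₀ hL0]
      linarith [hk k]
    -- unit vectors, after a shift
    obtain ⟨K, hK⟩ := (Filter.eventually_atTop.mp (hVtop.eventually_gt_atTop 0))
    have hunit : ∀ k : ℕ, (‖V (k + K)‖⁻¹ • V (k + K)) ∈ Metric.sphere (0:E) 1 := by
      intro k
      have := hK (k + K) (by omega)
      rw [mem_sphere_zero_iff_norm, norm_smul, norm_inv, norm_norm, inv_mul_cancel₀ this.ne']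
    obtain ⟨u, hu, ψ, hψ, hlim⟩ := (isCompact_sphere (0:E) 1).tendsto_subseq hunit
    refine ⟨⟨u, hu⟩, ?_⟩
    apply Subtype.ext
    change ξ u = ζ
    have hu0 : u ≠ 0 := hsph ⟨u, hu⟩
    have hNu := hNpos u hu0
    let κ : ℕ → ℕ := fun j => ψ j + K
    have hκ : Filter.Tendsto κ Filter.atTop Filter.atTop :=
      Filter.tendsto_atTop_mono (fun j => Nat.le_add_right _ _) hψ.tendsto_atTop
    let S : ℕ → ℝ := fun j => ‖V (κ j)‖
    have hS0 : ∀ j, 0 < S j := fun j => hK (κ j) (Nat.le_add_left _ _)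
    have hStop : Filter.Tendsto S Filter.atTop Filter.atTop := hVtop.comp hκ
    let e : ℕ → ℝ := fun j => ‖(S j)⁻¹ • V (κ j) - u‖
    have he : Filter.Tendsto e Filter.atTop (nhds 0) := by
      have := (tendsto_iff_norm_sub_tendsto_zero).mp hlim
      exact this
    have hmain : ∀ τ : ℝ, 0 ≤ τ → ζ (τ * N u) = η u τ := by
      intro τ hτ
      -- approximants
      have hbound : ∀ᶠ j in Filter.atTop, dist (ζ (τ * (κ j) / S j)) (η u τ) ≤
          τ * (L * e j) + (τ * D + τ * C + τ * R') / S j := by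
        filter_upwards [hStop.eventually_ge_atTop τ] with j hj
        have hSj := hS0 j
        have hm := hmem τ (S j) hτ hSj hj
        have h1 := hζ.2.2 (κ j) (by positivity) _ hm
        rw [hζ0, div_mul_eq_mul_div] at h1
        rw [← h1]
        have h2 := hη u τ hτ (S j) hSj hj
        have h3 := hσ.2.2 o (ζ (κ j)) o (P (S j • u)) _ hm
        rw [dist_self, mul_zero, zero_add] at h3
        have h4 := hlip (V (κ j)) (S j • u)
        have h5 : ‖V (κ j) - S j • u‖ = S j * e j := by
          change _ = S j * ‖(S j)⁻¹ • V (κ j) - u‖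
          have : V (κ j) - S j • u = S j • ((S j)⁻¹ • V (κ j) - u) := by
            rw [smul_sub, smul_inv_smul₀ hSj.ne']
          rw [this, norm_smul, Real.norm_of_nonneg hSj.le]
        rw [h5] at h4
        have h6 := (dist_triangle _ _ _).trans (add_le_add (hV (κ j)) h4)
        have h7 := mul_le_mul_of_nonneg_left h6 hm.1
        have h8 : τ / S j * (D + (L * (S j * e j) + C)) = τ * (L * e j) + (τ * D + τ * C) / S j := by
          field_simp; ring
        have h9 := dist_triangle_right (σ o (ζ (κ j)) (τ / S j)) (η u τ) (σ o (P (S j • u)) (τ / S j))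
        rw [add_div _ (τ * R')]
        linarith
      have hz : Filter.Tendsto (fun j => dist (ζ (τ * (κ j) / S j)) (η u τ))
          Filter.atTop (nhds 0) := by
        have h1 : Filter.Tendsto (fun j => τ * (L * e j) + (τ * D + τ * C + τ * R') / S j)
            Filter.atTop (nhds (τ * (L * 0) + 0)) :=
          ((he.const_mul L).const_mul τ).add (hStop.const_div_atTop _)
        rw [mul_zero, mul_zero, add_zero] at h1
        exact tendsto_of_tendsto_of_tendsto_of_le_of_le' tendsto_const_nhds h1
          (Filter.Eventually.of_forall fun _ => dist_nonneg) hbound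
      have hnn : ∀ j, 0 ≤ τ * (κ j) / S j := fun j => by
        have := hS0 j
        positivity
      have h1 : ∀ j, dist (ζ (τ * N u)) (η u τ) ≤ 2 * dist (ζ (τ * (κ j) / S j)) (η u τ) := by
        intro j
        have ha := hζ.2.1 (τ * N u) (τ * (κ j) / S j) (by positivity) (hnn j)
        have hb := hζ.2.1 (τ * (κ j) / S j) 0 (hnn j) le_rfl
        rw [hζ0, sub_zero, abs_of_nonneg (hnn j)] at hb
        have hc := hηdist u τ 0 hτ le_rfl
        rw [hη0, sub_zero, abs_of_nonneg hτ] at hc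
        have hd := abs_dist_sub_le (ζ (τ * (κ j) / S j)) (η u τ) o
        rw [hb, hc, abs_sub_comm, ← ha] at hd
        have := dist_triangle (ζ (τ * N u)) (ζ (τ * (κ j) / S j)) (η u τ)
        linarith
      have h2 : dist (ζ (τ * N u)) (η u τ) ≤ 2 * 0 :=
        ge_of_tendsto' (hz.const_mul 2) h1
      rw [mul_zero] at h2
      exact dist_le_zero.mp h2
    funext t
    rcases le_or_gt t 0 with ht | ht
    · rw [(hξray u hu0).1.1 t ht, hζ.1 t ht, (hξray u hu0).2, hζ0]
    · rw [hξt u t ht.le, ← hmain _ (by positivity), div_mul_cancel₀ _ hNu.ne']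

section flat
variable {G : Type*} [Group G] [MulAction G X] [ProperSpace X] [IsIsometricSMul G X]

theorem sib_len_bound {n : ℕ} (o : X) (act : (Fin n → ℤ) → G)
    (hadd : ∀ u v, act (u + v) = act u * act v) (h0 : act 0 = 1) :
    ∃ L : ℝ, 0 ≤ L ∧ ∀ (v : Fin n → ℤ) (c : ℝ), (∀ i, |(v i : ℝ)| ≤ c) →
      dist (act v • o) o ≤ L * c := by
  have htri : ∀ u v, dist (act (u + v) • o) o ≤ dist (act u • o) o + dist (act v • o) o := by
    intro u v
    have := dist_triangle (act (u + v) • o) (act u • o) o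
    rw [hadd, mul_smul, dist_smul] at this
    rw [hadd, mul_smul]; linarith
  have hneg : ∀ u, dist (act (-u) • o) o = dist (act u • o) o := by
    intro u
    rw [← dist_smul (act u), smul_smul, ← hadd, add_neg_cancel, h0, one_smul, dist_comm]
  have hnat : ∀ (u : Fin n → ℤ) (k : ℕ), dist (act (k • u) • o) o ≤ k * dist (act u • o) o := by
    intro u k
    induction k with
    | zero => simp [h0]
    | succ k ih =>
      rw [succ_nsmul]
      have := htri (k • u) u
      push_cast
      linarith
  have hint : ∀ (u : Fin n → ℤ) (k : ℤ), dist (act (k • u) • o) o ≤ |(k:ℝ)| * dist (act u • o) o := by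
    intro u k
    obtain ⟨m, rfl | rfl⟩ := k.eq_nat_or_neg
    · simpa using hnat u m
    · rw [neg_smul, hneg]
      simpa using hnat u m
  have hsum : ∀ (s : Finset (Fin n)) (f : Fin n → (Fin n → ℤ)),
      dist (act (∑ i ∈ s, f i) • o) o ≤ ∑ i ∈ s, dist (act (f i) • o) o := by
    intro s f
    induction s using Finset.induction_on with
    | empty => simp [h0]
    | insert a s ha ih =>
      rw [Finset.sum_insert ha, Finset.sum_insert ha]
      exact (htri _ _).trans (by linarith)
  refine ⟨∑ i, dist (act (Pi.single i 1) • o) o, Finset.sum_nonneg fun _ _ => dist_nonneg, ?_⟩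
  intro v c hc
  have hv : v = ∑ i, v i • (Pi.single i (1:ℤ) : Fin n → ℤ) := by
    ext j
    simp [Finset.sum_apply, Pi.single_apply]
  calc dist (act v • o) o = dist (act (∑ i, v i • (Pi.single i (1:ℤ) : Fin n → ℤ)) • o) o := by
        rw [← hv]
    _ ≤ ∑ i, dist (act (v i • (Pi.single i (1:ℤ) : Fin n → ℤ)) • o) o := hsum _ _
    _ ≤ ∑ i, dist (act (Pi.single i 1) • o) o * c := by
        refine Finset.sum_le_sum fun i _ => (hint _ _).trans ?_
        rw [mul_comm]
        exact mul_le_mul_of_nonneg_left (hc i) dist_nonneg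
    _ = _ := by rw [Finset.sum_mul]

theorem sib_main
    (σ : X → X → ℝ → X) (hσ : IsCCC σ) (hrev : IsReversible σ)
    (hequiv : ∀ (g : G) (x y : X), ∀ t ∈ Set.Icc (0 : ℝ) 1,
      g • σ x y t = σ (g • x) (g • y) t)
    (hproperact : ∀ K : Set X, IsCompact K → {g : G | ((g • K) ∩ K).Nonempty}.Finite)
    (hcocompact : ∃ K : Set X, IsCompact K ∧ ∀ x : X, ∃ g : G, x ∈ g • K)
    (n : ℕ) (A : Subgroup G)
    (e : A ≃* Multiplicative (Fin n → ℤ)) (o : X) :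
    ∃ F : Metric.sphere (0 : EuclideanSpace ℝ (Fin n)) 1 →
        {ξ : ℝ → X // IsRay σ ξ ∧ ξ 0 = o},
      Function.Injective F ∧
      (∀ v : Metric.sphere (0 : EuclideanSpace ℝ (Fin n)) 1, ∀ ε : ℝ, 0 < ε →
        ∃ δ : ℝ, 0 < δ ∧ ∀ w : Metric.sphere (0 : EuclideanSpace ℝ (Fin n)) 1,
          dist v w < δ → dO o (F v).1 (F w).1 < ε) ∧
      (A.FiniteIndex → Function.Surjective F) := by
  let act : (Fin n → ℤ) → G := fun v => (e.symm (Multiplicative.ofAdd v) : A)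
  have hadd : ∀ u v, act (u + v) = act u * act v := by
    intro u v
    simp [act, ofAdd_add]
  have h0 : act 0 = 1 := by simp [act]
  have hact_mem : ∀ v, act v ∈ A := fun v => (e.symm (Multiplicative.ofAdd v)).2
  have hact_inj : Function.Injective act := by
    intro u v h
    have := e.symm.injective (Subtype.ext h)
    exact Multiplicative.ofAdd.injective this
  have hact_surj : ∀ a ∈ A, ∃ v, act v = a := by
    intro a ha
    refine ⟨Multiplicative.toAdd (e ⟨a, ha⟩), ?_⟩
    simp [act]
  have hneg : ∀ v, act (-v) = (act v)⁻¹ := by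
    intro v
    rw [eq_inv_iff_mul_eq_one, ← hadd, neg_add_cancel, h0]
  have hcomm : ∀ a ∈ A, ∀ b ∈ A, a * b = b * a := by
    intro a ha b hb
    obtain ⟨u, rfl⟩ := hact_surj a ha
    obtain ⟨v, rfl⟩ := hact_surj b hb
    rw [← hadd, add_comm, hadd]
  have hfg : A.FG := by
    rw [← Group.fg_iff_subgroup_fg]
    have h1 : Group.FG (Multiplicative (Fin n → ℤ)) := by
      have : AddGroup.FG (Fin n → ℤ) := Module.Finite.iff_addGroup_fg.mp inferInstance
      infer_instance
    exact Group.fg_of_surjective (f := e.symm.toMonoidHom) e.symm.surjective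
  obtain ⟨F, hF⟩ := hfg
  obtain ⟨R, hR0, hR⟩ := sib_midpoint_bound σ hσ hrev hequiv hproperact hcocompact o A hcomm
    (F : Set G) F.finite_toSet hF
  obtain ⟨L, hL0, hL⟩ := sib_len_bound (X := X) o act hadd h0
  have hdist : ∀ u v, dist (act u • o) (act v • o) = dist (act (u - v) • o) o := by
    intro u v
    rw [← dist_smul (act v) (act (u - v) • o), smul_smul, ← hadd, add_sub_cancel]
  let E := EuclideanSpace ℝ (Fin n)
  let fl : E → (Fin n → ℤ) := fun x i => ⌊x i⌋
  let P : E → X := fun x => act (fl x) • o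
  have hcoord : ∀ (x : E) i, |x i| ≤ ‖x‖ := fun x i => PiLp.norm_apply_le x i
  have hfl : ∀ (x : E) i, ((fl x i : ℤ) : ℝ) ≤ x i ∧ x i < (fl x i : ℤ) + 1 := fun x i =>
    ⟨Int.floor_le _, Int.lt_floor_add_one _⟩
  have hP0 : P 0 = o := by
    have : fl 0 = 0 := by ext i; simp [fl]
    simp [P, this, h0]
  have hlip : ∀ x y, dist (P x) (P y) ≤ L * ‖x - y‖ + L := by
    intro x y
    have h1 : dist (P x) (P y) ≤ L * (‖x - y‖ + 1) := by
      change dist (act _ • o) (act _ • o) ≤ _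
      rw [hdist]
      apply hL
      intro i
      have h2 := hcoord (x - y) i
      rw [PiLp.sub_apply, abs_le] at h2
      obtain ⟨h3, h4⟩ := hfl x i
      obtain ⟨h5, h6⟩ := hfl y i
      rw [Pi.sub_apply, Int.cast_sub, abs_le]
      constructor <;> linarith
    linarith
  have hmid : ∀ x y, dist (σ (P x) (P y) (1/2)) (P ((1/2 : ℝ) • (x + y))) ≤ R + L := by
    intro x y
    set u := fl x with hu
    set v := fl y with hv
    set w := fl ((1/2 : ℝ) • (x + y)) with hw
    have h1 := hR (act (w - u)) (hact_mem _)
    rw [← dist_smul (act w), hequiv _ _ _ _ ⟨by norm_num, by norm_num⟩, ← hneg, smul_smul,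
      smul_smul, ← hadd, ← hadd] at h1
    have h2 : w + -(w - u) = u := by abel
    rw [h2] at h1
    have h3 := sib_mid_conv hσ (act u • o) (act v • o) (act u • o) (act (w + (w - u)) • o)
    rw [dist_self, zero_add, hdist] at h3
    have h4 : dist (act (v - (w + (w - u))) • o) o ≤ L * 2 := by
      apply hL
      intro i
      obtain ⟨h3, h4⟩ := hfl x i
      obtain ⟨h5, h6⟩ := hfl y i
      obtain ⟨h7, h8⟩ := hfl ((1/2 : ℝ) • (x + y)) i
      rw [PiLp.smul_apply, PiLp.add_apply, smul_eq_mul] at h7 h8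
      rw [← hu] at h3 h4
      rw [← hv] at h5 h6
      rw [← hw] at h7 h8
      simp only [Pi.sub_apply, Pi.add_apply]
      push_cast
      rw [abs_le]
      constructor <;> linarith
    have h5 := dist_triangle (σ (act u • o) (act v • o) (1/2))
      (σ (act u • o) (act (w + (w - u)) • o) (1/2)) (act w • o)
    change dist (σ (act u • o) (act v • o) (1/2)) (act w • o) ≤ _
    linarith
  have hprop : ∀ r : ℝ, ∃ M : ℝ, ∀ x y, dist (P x) (P y) ≤ r → ‖x - y‖ ≤ M := by
    intro r
    have hfin : {v : Fin n → ℤ | dist (act v • o) o ≤ r}.Finite :=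
      (sib_finite_disp hproperact o r).preimage hact_inj.injOn
    obtain ⟨B, hB⟩ := (hfin.image (fun v => ∑ i, |((v i : ℤ) : ℝ)|)).bddAbove
    refine ⟨∑ _i : Fin n, (|B| + 1), ?_⟩
    intro x y hxy
    change dist (act _ • o) (act _ • o) ≤ _ at hxy
    rw [hdist] at hxy
    have h1 : ∑ i, |(((fl x - fl y) i : ℤ) : ℝ)| ≤ B := hB (Set.mem_image_of_mem _ hxy)
    have h2 : ‖x - y‖ ≤ ∑ i, ‖(x - y) i‖ := by
      have hrep : x - y = ∑ i, EuclideanSpace.single i ((x - y) i) := by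
        ext j
        simp [Finset.sum_apply]
      calc ‖x - y‖ = ‖∑ i, EuclideanSpace.single i ((x - y) i)‖ := by rw [← hrep]
        _ ≤ ∑ i, ‖(EuclideanSpace.single i ((x - y) i) : E)‖ := norm_sum_le _ _
        _ = _ := by simp
    refine h2.trans (Finset.sum_le_sum fun i _ => ?_)
    have h3 : |(((fl x - fl y) i : ℤ) : ℝ)| ≤ B :=
      (Finset.single_le_sum (f := fun i => |(((fl x - fl y) i : ℤ) : ℝ)|)
        (fun _ _ => abs_nonneg _) (Finset.mem_univ i)).trans h1
    have h3' := h3.trans (le_abs_self B)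
    rw [Pi.sub_apply, Int.cast_sub, abs_le] at h3'
    obtain ⟨h4, h5⟩ := hfl x i
    obtain ⟨h6, h7⟩ := hfl y i
    rw [Real.norm_eq_abs, PiLp.sub_apply, abs_le]
    constructor <;> linarith
  obtain ⟨Φ, hinj, hcont, hsurj⟩ := sib_flat_rays σ hσ o P hP0 L L (R + L) hL0 hL0
    (by positivity) hlip hmid hprop
  refine ⟨Φ, hinj, hcont, fun hfi => hsurj ?_⟩
  obtain ⟨K, hK, hcov⟩ := hcocompact
  obtain ⟨r, hr⟩ := hK.isBounded.subset_closedBall o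
  have : Finite (G ⧸ A) := Subgroup.finite_quotient_of_finiteIndex
  obtain ⟨M, hM⟩ := (Set.finite_range (fun q : G ⧸ A => dist ((Quotient.out q)⁻¹ • o) o)).bddAbove
  refine ⟨r + M, fun z => ?_⟩
  obtain ⟨g, k, hk, rfl⟩ := hcov z
  have hko : dist k o ≤ r := mem_closedBall.mp (hr hk)
  set q : G := Quotient.out ((g⁻¹ : G) : G ⧸ A) with hq
  have hqA : q⁻¹ * g⁻¹ ∈ A := by
    rw [← QuotientGroup.eq]
    exact Quotient.out_eq _
  obtain ⟨v, hv⟩ := hact_surj _ (inv_mem hqA)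
  refine ⟨WithLp.toLp 2 (fun i => (v i : ℝ)), ?_⟩
  have h1 : fl (WithLp.toLp 2 (fun i => (v i : ℝ))) = v := by
    ext i; simp [fl]
  change dist (g • k) (act _ • o) ≤ _
  rw [h1, hv, mul_inv_rev, inv_inv, mul_smul, dist_smul, inv_inv]
  have h2 : dist (q⁻¹ • o) o ≤ M := hM ⟨_, rfl⟩
  have h3 : dist k (q • o) ≤ dist k o + dist o (q • o) := dist_triangle _ _ _
  have h4 : dist o (q • o) = dist (q⁻¹ • o) o := by
    rw [← dist_smul q (q⁻¹ • o), smul_inv_smul]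
  linarith

end flat

/-- **Spheres in the boundary** (Proposition `sphereinbdry`): if a group `G` acts
geometrically on a proper metric space `X` with a ccc, reversible, `G`-equivariant
bicombing `σ` and contains a copy of `ℤⁿ`, then the boundary (the set of `σ`-rays
from a basepoint `o`, metrized by `d_o`, which is indeed a metric on this set)
contains a topologically embedded copy of `S^{n-1}`; moreover, if the copy of `ℤⁿ`
has finite index, the boundary is homeomorphic to `S^{n-1}`. -/
theorem sphere_in_boundary
    {G : Type*} [Group G] [MulAction G X] [ProperSpace X]
    (σ : X → X → ℝ → X) (hσ : IsCCC σ) (hrev : IsReversible σ)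
    (hiso : ∀ g : G, Isometry (fun x : X => g • x))
    (hequiv : ∀ (g : G) (x y : X), ∀ t ∈ Set.Icc (0 : ℝ) 1,
      g • σ x y t = σ (g • x) (g • y) t)
    (hproperact : ∀ K : Set X, IsCompact K → {g : G | ((g • K) ∩ K).Nonempty}.Finite)
    (hcocompact : ∃ K : Set X, IsCompact K ∧ ∀ x : X, ∃ g : G, x ∈ g • K)
    (n : ℕ) (hn : 1 ≤ n) (A : Subgroup G)
    (hA : Nonempty (A ≃* Multiplicative (Fin n → ℤ)))
    (o : X) :
    -- `d_o` is a metric on the set of σ-rays emanating from `o`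
    (∀ ξ ζ θ : ℝ → X, IsRay σ ξ → IsRay σ ζ → IsRay σ θ →
        ξ 0 = o → ζ 0 = o → θ 0 = o →
        0 ≤ dO o ξ ζ ∧ (dO o ξ ζ = 0 ↔ ξ = ζ) ∧ dO o ξ ζ = dO o ζ ξ ∧
          dO o ξ θ ≤ dO o ξ ζ + dO o ζ θ) ∧
    -- a topological embedding of the sphere `S^{n-1}`, surjective when `A` has finite index
    ∃ F : Metric.sphere (0 : EuclideanSpace ℝ (Fin n)) 1 →
        {ξ : ℝ → X // IsRay σ ξ ∧ ξ 0 = o},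
      Function.Injective F ∧
      (∀ v : Metric.sphere (0 : EuclideanSpace ℝ (Fin n)) 1, ∀ ε : ℝ, 0 < ε →
        ∃ δ : ℝ, 0 < δ ∧ ∀ w : Metric.sphere (0 : EuclideanSpace ℝ (Fin n)) 1,
          dist v w < δ → dO o (F v).1 (F w).1 < ε) ∧
      (A.FiniteIndex → Function.Surjective F) := by
  have : IsIsometricSMul G X := ⟨hiso⟩
  obtain ⟨e⟩ := hA
  refine ⟨?_, sib_main σ hσ hrev hequiv hproperact hcocompact n A e o⟩
  intro ξ ζ θ hξ hζ _ h0 h1 _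
  exact sib_dO_metric o ξ ζ θ hξ hζ h0 h1
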